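/- Let R be a standard graded algebra over an infinite field K with n = dim_K R_1, let d > 0 be a degree, and let r ≥ d + n − 1. Then r general linear forms of R satisfy property (Gr,d); that is, there exists a nonempty Zariski open subset U ⊆ 𝔸(R_1)^r such that every r-tuple (l_1,…,l_r) ∈ U satisfies (Gr,d). -/

import Mathlib

/-- Polynomial functions on a `K`-vector space `V`: the subalgebra of `V → K`
generated by the linear functionals. -/
def polyFuns (K V : Type*) [Field K] [AddCommGroup V] [Module K V] : Subalgebra K (V → K) :=
  Algebra.adjoin K {f : V → K | ∃ φ : V →ₗ[K] K, ⇑φ = f}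

/-- A subset of (the affine space of) a `K`-vector space is Zariski closed if it is the
common zero locus of a family of polynomial functions. -/
def IsZClosed (K : Type*) {V : Type*} [Field K] [AddCommGroup V] [Module K V]
    (Z : Set V) : Prop :=
  ∃ S : Set (V → K), (∀ f ∈ S, f ∈ polyFuns K V) ∧ Z = {v | ∀ f ∈ S, f v = 0}

/-- A subset is Zariski open if its complement is Zariski closed. -/
def IsZOpen (K : Type*) {V : Type*} [Field K] [AddCommGroup V] [Module K V]
    (U : Set V) : Prop :=
  IsZClosed K Uᶜ

/-- An irreducible variety: a nonempty Zariski closed set which is not the union of two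
proper closed subsets. -/
def IsIrredVariety (K : Type*) {V : Type*} [Field K] [AddCommGroup V] [Module K V]
    (W : Set V) : Prop :=
  IsZClosed K W ∧ W.Nonempty ∧
    ∀ Z₁ Z₂ : Set V, IsZClosed K Z₁ → IsZClosed K Z₂ → W ⊆ Z₁ ∪ Z₂ → (W ⊆ Z₁ ∨ W ⊆ Z₂)

/-- Auxiliary recursion for `wordIdeal`: letters are booleans, `true` standing for the
letter `c` (colon) and `false` for the letter `s` (sum). The natural number argument keeps
track of which linear form is to be used next (0-indexed). -/
def wordIdealAux {R : Type*} [CommRing R] (l : ℕ → R) : ℕ → Ideal R → List Bool → Ideal R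
  | _, I, [] => I
  | j, I, a :: o =>
      wordIdealAux l (j + 1)
        (if a then I.colon (Ideal.span {l j}) else I ⊔ Ideal.span {l j}) o

/-- The ideal `I_{l,o}` attached to a sequence of (linear) forms `l` and a word `o` in the
letters `{c, s}` (here `c = true`, `s = false`): starting from `(0)`, the `j`-th letter
either colons (`c`) or adds (`s`) the `j`-th form. -/
def wordIdeal {R : Type*} [CommRing R] (l : ℕ → R) (o : List Bool) : Ideal R :=
  wordIdealAux l 0 ⊥ o

/-- The degree `d` component `I ∩ R_d` of an ideal `I`, as a `K`-subspace of `𝒜 d`. -/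
def homComp {K R : Type*} [Field K] [CommRing R] [Algebra K R]
    (𝒜 : ℕ → Submodule K R) (I : Ideal R) (d : ℕ) : Submodule K (𝒜 d) :=
  Submodule.comap (𝒜 d).subtype (Submodule.restrictScalars K I)

/-- `dim_K (I)_d`, the dimension of the degree `d` component of the (homogeneous) ideal `I`. -/
noncomputable def homDim {K R : Type*} [Field K] [CommRing R] [Algebra K R]
    (𝒜 : ℕ → Submodule K R) (I : Ideal R) (d : ℕ) : ℕ :=
  Module.finrank K (homComp 𝒜 I d)

/-- `dim_K (R/I)_d`, the dimension of the degree `d` component of `R/I` for a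
(homogeneous) ideal `I`, computed as `dim 𝒜 d / (I ∩ 𝒜 d)`. -/
noncomputable def quotDim {K R : Type*} [Field K] [CommRing R] [Algebra K R]
    (𝒜 : ℕ → Submodule K R) (I : Ideal R) (d : ℕ) : ℕ :=
  Module.finrank K ((𝒜 d) ⧸ homComp 𝒜 I d)

/-- `macaulayDown c d = c_⟨d⟩`: if `c = C(k_d,d) + … + C(k_1,1)` is the `d`-th Macaulay
representation of `c`, then `c_⟨d⟩ = C(k_d - 1,d) + … + C(k_1 - 1,1)`; computed greedily. -/
def macaulayDown : ℕ → ℕ → ℕ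
  | _, 0 => 0
  | c, d + 1 =>
      let k := Nat.findGreatest (fun k => Nat.choose k (d + 1) ≤ c) (c + d + 1)
      Nat.choose (k - 1) (d + 1) + macaulayDown (c - Nat.choose k (d + 1)) d

/-- Property (Gr,d) for the linear forms `l 0, …, l (r-1)` (letters: `true = c`,
`false = s`): for every word `o` of length `i ≤ r`,
(1) if `m ⊄ I_o` and `i < r` then `l_{i+1} ∉ I_o`;
(2) if `i = r` and `|o|_c < d` then `m ⊆ I_o`;
(3) if `i ≤ r - 2` then `dim (I_{o,c,s})_{d - |o|_c - 1} ≤ dim (I_{o,s,c})_{d - |o|_c - 1}`. -/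
def GrProp {K R : Type*} [Field K] [CommRing R] [Algebra K R]
    (𝒜 : ℕ → Submodule K R) [GradedAlgebra 𝒜] (l : ℕ → R) (r d : ℕ) : Prop :=
  ∀ o : List Bool, o.length ≤ r →
    (¬ (HomogeneousIdeal.irrelevant 𝒜).toIdeal ≤ wordIdeal l o → o.length < r →
        l o.length ∉ wordIdeal l o) ∧
    (o.length = r → o.count true < d →
        (HomogeneousIdeal.irrelevant 𝒜).toIdeal ≤ wordIdeal l o) ∧
    (o.length + 2 ≤ r →
        homDim 𝒜 (wordIdeal l (o ++ [true, false])) (d - o.count true - 1) ≤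
          homDim 𝒜 (wordIdeal l (o ++ [false, true])) (d - o.count true - 1))

/-!
For a fixed word `o` and degree `e`, the component `(I_o)_e` is the preimage of a range under linear
maps whose matrix entries are polynomials in the coefficients of the forms. The ranks of such maps
are constant on a nonempty Zariski open set, hence so is `dim (I_o)_e`.

* For (1), `dim (I_o)_1` and `dim (I_{o,s})_1` have generic values. If `m ⊄ I_o` generically, then
  changing only the next form, which does not affect `I_o`, moves it out of `(I_o)_1`; so the second
  value is larger than the first, and the next form of a general tuple is not in `I_o`.
* For (2), by (1) each letter `s` raises `dim (I_o)_1` until `m ⊆ I_o`, and a word of length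
  `r ≥ d + n - 1` with fewer than `d` letters `c` has at least `n` letters `s`.
* For (3), `(I : p) + (q) ⊆ (I + (q)) : p`, which compares `I_{o,c,s}` with the ideal `I_{o,s,c}` of
  the tuple with two adjacent forms exchanged; exchanging forms preserves generic dimensions.
-/

open Module

section PolynomialFunctions

variable {K V V' : Type*} [Field K] [AddCommGroup V] [Module K V] [AddCommGroup V'] [Module K V']

theorem linearMap_mem_polyFuns (φ : V →ₗ[K] K) : ⇑φ ∈ polyFuns K V :=
  Algebra.subset_adjoin ⟨φ, rfl⟩

theorem const_mem_polyFuns (c : K) : (fun _ : V => c) ∈ polyFuns K V :=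
  (polyFuns K V).algebraMap_mem c

theorem comp_affineMap_mem_polyFuns {f : V → K} (hf : f ∈ polyFuns K V) (A : V' →ᵃ[K] V) :
    f ∘ A ∈ polyFuns K V' := by
  unfold polyFuns at hf
  induction hf using Algebra.adjoin_induction with
  | mem f hf =>
    obtain ⟨φ, rfl⟩ := hf
    have hsplit : φ ∘ A = ⇑(φ ∘ₗ A.linear) + fun _ => φ (A 0) := by
      ext y
      simp [congr_fun A.decomp y]
    exact hsplit ▸ add_mem (linearMap_mem_polyFuns _) (const_mem_polyFuns _)
  | algebraMap c => exact const_mem_polyFuns c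
  | add f g _ _ hf hg => exact add_mem hf hg
  | mul f g _ _ hf hg => exact mul_mem hf hg

theorem exists_polynomial_eval_eq_of_mem_polyFuns {f : K → K} (hf : f ∈ polyFuns K K) :
    ∃ p : Polynomial K, ∀ t, p.eval t = f t := by
  unfold polyFuns at hf
  induction hf using Algebra.adjoin_induction with
  | mem f hf =>
    obtain ⟨φ, rfl⟩ := hf
    refine ⟨Polynomial.C (φ 1) * Polynomial.X, fun t => ?_⟩
    rw [Polynomial.eval_C_mul, Polynomial.eval_X, mul_comm, ← smul_eq_mul, ← map_smul, smul_eq_mul,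
      mul_one]
  | algebraMap c => exact ⟨Polynomial.C c, fun t => by simp⟩
  | add f g _ _ hf hg =>
    obtain ⟨⟨p, hp⟩, q, hq⟩ := hf, hg
    exact ⟨p + q, fun t => by simp [hp, hq]⟩
  | mul f g _ _ hf hg =>
    obtain ⟨⟨p, hp⟩, q, hq⟩ := hf, hg
    exact ⟨p * q, fun t => by simp [hp, hq]⟩

theorem exists_mul_ne_zero_of_mem_polyFuns [Infinite K] {f g : V → K} (hf : f ∈ polyFuns K V)
    (hg : g ∈ polyFuns K V) (hf0 : ∃ x, f x ≠ 0) (hg0 : ∃ x, g x ≠ 0) :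
    ∃ x, f x * g x ≠ 0 := by
  obtain ⟨⟨a, ha⟩, b, hb⟩ := hf0, hg0
  let line : K →ᵃ[K] V := AffineMap.lineMap a b
  obtain ⟨p, hp⟩ := exists_polynomial_eval_eq_of_mem_polyFuns (comp_affineMap_mem_polyFuns hf line)
  obtain ⟨q, hq⟩ := exists_polynomial_eval_eq_of_mem_polyFuns (comp_affineMap_mem_polyFuns hg line)
  have hp0 : p ≠ 0 := by
    rintro rfl
    exact ha (by simpa [line] using (hp 0).symm)
  have hq0 : q ≠ 0 := by
    rintro rfl
    exact hb (by simpa [line] using (hq 1).symm)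
  by_contra! hfg
  refine mul_ne_zero hp0 hq0 (Polynomial.funext fun t => ?_)
  simpa [hp, hq] using hfg (line t)

theorem det_mem_polyFuns {n : Type*} [Fintype n] [DecidableEq n] {N : V → Matrix n n K}
    (hN : ∀ i j, (fun x => N x i j) ∈ polyFuns K V) : (fun x => (N x).det) ∈ polyFuns K V := by
  have hdet : (fun x => (N x).det) =
      ∑ σ : Equiv.Perm n, (Equiv.Perm.sign σ : ℤ) • ∏ i, fun x => N x (σ i) i := by
    ext x
    simp [Matrix.det_apply, Units.smul_def]
  exact hdet ▸ sum_mem fun σ _ => zsmul_mem (prod_mem fun i _ => hN _ _) _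

end PolynomialFunctions

section GenericFilter

variable {K V V' : Type*} [Field K] [Infinite K] [AddCommGroup V] [Module K V]
  [AddCommGroup V'] [Module K V']

/-- The filter of sets containing a nonempty Zariski open subset, so that
`∀ᶠ x in genericFilter K V, P x` says that a general point of `V` satisfies `P`. It is enough to
consider basic open sets `{x | f x ≠ 0}`. -/
def genericFilter (K V : Type*) [Field K] [Infinite K] [AddCommGroup V] [Module K V] :
    Filter V where
  sets := {s | ∃ f ∈ polyFuns K V, (∃ x, f x ≠ 0) ∧ ∀ x, f x ≠ 0 → x ∈ s}
  univ_sets := ⟨1, one_mem _, ⟨0, one_ne_zero⟩, fun _ _ => trivial⟩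
  sets_of_superset := fun ⟨f, hf, hf0, hfs⟩ hst => ⟨f, hf, hf0, fun x hx => hst (hfs x hx)⟩
  inter_sets := fun ⟨f, hf, hf0, hfs⟩ ⟨g, hg, hg0, hgt⟩ =>
    ⟨f * g, mul_mem hf hg, exists_mul_ne_zero_of_mem_polyFuns hf hg hf0 hg0, fun x hx =>
      ⟨hfs x (left_ne_zero_of_mul hx), hgt x (right_ne_zero_of_mul hx)⟩⟩

theorem eventually_genericFilter_iff {P : V → Prop} :
    (∀ᶠ x in genericFilter K V, P x) ↔
      ∃ f ∈ polyFuns K V, (∃ x, f x ≠ 0) ∧ ∀ x, f x ≠ 0 → P x :=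
  Iff.rfl

instance genericFilter_neBot : (genericFilter K V).NeBot :=
  ⟨fun h => by
    obtain ⟨f, -, ⟨x, hx⟩, hfP⟩ := Filter.empty_mem_iff_bot.2 h
    exact hfP x hx⟩

theorem eventually_ne_zero_of_mem_polyFuns {f : V → K} (hf : f ∈ polyFuns K V)
    (hf0 : ∃ x, f x ≠ 0) : ∀ᶠ x in genericFilter K V, f x ≠ 0 :=
  ⟨f, hf, hf0, fun _ hx => hx⟩

theorem exists_isZOpen_of_eventually {P : V → Prop} (h : ∀ᶠ x in genericFilter K V, P x) :
    ∃ U : Set V, IsZOpen K U ∧ U.Nonempty ∧ ∀ x ∈ U, P x := by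
  obtain ⟨f, hf, hf0, hfP⟩ := eventually_genericFilter_iff.1 h
  exact ⟨{x | f x ≠ 0}, ⟨{f}, by simpa using hf, by ext; simp⟩, hf0, hfP⟩

theorem tendsto_genericFilter_of_surjective (L : V' →ₗ[K] V) (hL : Function.Surjective L) :
    Filter.Tendsto L (genericFilter K V') (genericFilter K V) := by
  rintro s ⟨f, hf, ⟨x, hx⟩, hfs⟩
  obtain ⟨y, rfl⟩ := hL x
  exact ⟨f ∘ L, comp_affineMap_mem_polyFuns hf L.toAffineMap, ⟨y, hx⟩, fun z => hfs (L z)⟩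

theorem eventually_eventually_update {ι : Type*} [DecidableEq ι] {P : (ι → V) → Prop}
    (h : ∀ᶠ x in genericFilter K (ι → V), P x) (i : ι) :
    ∀ᶠ x in genericFilter K (ι → V), ∀ᶠ y in genericFilter K V, P (Function.update x i y) := by
  obtain ⟨f, hf, hf0, hfP⟩ := eventually_genericFilter_iff.1 h
  filter_upwards [eventually_ne_zero_of_mem_polyFuns hf hf0] with x hx
  let updateMap : V →ᵃ[K] ι → V :=
    (LinearMap.single K (fun _ => V) i).toAffineMap + AffineMap.const K V (Function.update x i 0)
  have hupdate (y : V) : updateMap y = Function.update x i y := by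
    ext j
    obtain rfl | hj := eq_or_ne j i <;> simp [updateMap, *]
  have hfu : (fun y => f (Function.update x i y)) ∈ polyFuns K V := by
    simpa only [Function.comp_def, hupdate] using comp_affineMap_mem_polyFuns hf updateMap
  exact ⟨_, hfu, ⟨x i, by simpa using hx⟩, fun y => hfP _⟩

theorem eventually_notMem_of_ne_top {S : Submodule K V} (hS : S ≠ ⊤) :
    ∀ᶠ x in genericFilter K V, x ∉ S := by
  obtain ⟨φ, hφ, hSφ⟩ := S.exists_le_ker_of_lt_top hS.lt_top
  filter_upwards [eventually_ne_zero_of_mem_polyFuns (linearMap_mem_polyFuns φ)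
    (DFunLike.ne_iff.1 hφ)] with x hx hxS
  exact hx (hSφ hxS)

end GenericFilter

section LinearAlgebra

variable {K E V W : Type*} [Field K] [AddCommGroup E] [Module K E] [AddCommGroup V] [Module K V]
  [AddCommGroup W] [Module K W]

theorem comap_sup_map_eq (A : E →ₗ[K] W) (P : Submodule K W) (Q : Submodule K E) :
    (P ⊔ Q.map A).comap A = P.comap A ⊔ Q := by
  refine le_antisymm (fun e he => ?_) (sup_le (Submodule.comap_mono le_sup_left)
    (Submodule.map_le_iff_le_comap.1 le_sup_right))
  obtain ⟨w, hw, _, ⟨q, hq, rfl⟩, hwq⟩ := Submodule.mem_sup.1 (Submodule.mem_comap.1 he)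
  refine Submodule.mem_sup.2 ⟨e - q, ?_, q, hq, sub_add_cancel e q⟩
  rwa [Submodule.mem_comap, map_sub, ← hwq, add_sub_cancel_right]

theorem finrank_map_add_finrank_ker_of_ker_le [FiniteDimensional K E] (A : E →ₗ[K] W)
    {Q : Submodule K E} (hQ : LinearMap.ker A ≤ Q) :
    finrank K (Q.map A) + finrank K (LinearMap.ker A) = finrank K Q := by
  rw [← LinearMap.finrank_range_add_finrank_ker (A.domRestrict Q), LinearMap.range_domRestrict,
    LinearMap.ker_domRestrict, (Submodule.comapSubtypeEquivOfLe hQ).finrank_eq]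

theorem finrank_comap_add_finrank_range_sup [FiniteDimensional K E] [FiniteDimensional K W]
    (A : E →ₗ[K] W) (P : Submodule K W) :
    finrank K (P.comap A) + finrank K ↥(LinearMap.range A ⊔ P) = finrank K E + finrank K P := by
  have hcomap := finrank_map_add_finrank_ker_of_ker_le A (LinearMap.ker_le_comap (p := P) A)
  rw [Submodule.map_comap_eq] at hcomap
  have hmodular := Submodule.finrank_sup_add_finrank_inf_eq (LinearMap.range A) P
  have hnullity := A.finrank_range_add_finrank_ker
  omega

theorem linearIndependent_of_det_ne_zero {n : Type*} [Fintype n] [DecidableEq n] {w : n → W}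
    {φ : n → W →ₗ[K] K} (h : (Matrix.of fun i j => φ i (w j)).det ≠ 0) :
    LinearIndependent K w :=
  .of_comp (LinearMap.pi φ) (Matrix.linearIndependent_cols_of_det_ne_zero h)

theorem exists_dual_family_matrix_eq_one (A : V →ₗ[K] W)
    [FiniteDimensional K (LinearMap.range A)] :
    ∃ (v : Fin (finrank K (LinearMap.range A)) → V)
      (φ : Fin (finrank K (LinearMap.range A)) → W →ₗ[K] K),
      (Matrix.of fun i j => φ i (A (v j))) = 1 := by
  let b := finBasis K (LinearMap.range A)
  choose v hv using fun i => (b i).2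
  choose φ hφ using fun i => LinearMap.exists_extend (b.coord i)
  refine ⟨v, φ, Matrix.ext fun i j => ?_⟩
  have hδ : φ i (b j) = b.coord i (b j) := LinearMap.congr_fun (hφ i) (b j)
  simp [hv, hδ, Matrix.one_apply, Finsupp.single_apply, eq_comm]

end LinearAlgebra

section PolynomialFamilies

/-- A family of linear maps `M x : V → W` whose matrix entries are polynomial functions of the
parameter `x`. -/
def IsPolynomialFamily {K X V W : Type*} [Field K] [AddCommGroup X] [Module K X]
    [AddCommGroup V] [Module K V] [AddCommGroup W] [Module K W] (M : X → V →ₗ[K] W) : Prop :=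
  ∀ (v : V) (φ : W →ₗ[K] K), (fun x => φ (M x v)) ∈ polyFuns K X

namespace IsPolynomialFamily

variable {K X E V W : Type*} [Field K] [AddCommGroup X] [Module K X] [AddCommGroup E] [Module K E]
  [AddCommGroup V] [Module K V] [AddCommGroup W] [Module K W]

theorem const (M : V →ₗ[K] W) : IsPolynomialFamily fun _ : X => M :=
  fun v φ => const_mem_polyFuns (φ (M v))

theorem linear (M : X →ₗ[K] V →ₗ[K] W) : IsPolynomialFamily fun x => M x :=
  fun v φ => linearMap_mem_polyFuns (φ ∘ₗ M.flip v)

theorem comp [FiniteDimensional K E] {A : X → E →ₗ[K] W} {C : X → V →ₗ[K] E}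
    (hA : IsPolynomialFamily A) (hC : IsPolynomialFamily C) :
    IsPolynomialFamily fun x => A x ∘ₗ C x := by
  intro v φ
  let b := finBasis K E
  have hsum : (fun x => φ ((A x ∘ₗ C x) v)) =
      ∑ i, (fun x => b.coord i (C x v)) * fun x => φ (A x (b i)) := by
    ext x
    conv_lhs => rw [LinearMap.comp_apply, ← b.sum_repr (C x v), map_sum, map_sum]
    simp
  exact hsum ▸ sum_mem fun i _ => mul_mem (hC _ _) (hA _ _)

theorem coprod {A : X → E →ₗ[K] W} {B : X → V →ₗ[K] W} (hA : IsPolynomialFamily A)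
    (hB : IsPolynomialFamily B) : IsPolynomialFamily fun x => (A x).coprod (B x) := by
  intro v φ
  simpa only [LinearMap.coprod_apply, map_add] using! add_mem (hA v.1 φ) (hB v.2 φ)

theorem eventually_finrank_range_le [Infinite K] [FiniteDimensional K W] {M : X → V →ₗ[K] W}
    (hM : IsPolynomialFamily M) (x₀ : X) :
    ∀ᶠ x in genericFilter K X,
      finrank K (LinearMap.range (M x₀)) ≤ finrank K (LinearMap.range (M x)) := by
  obtain ⟨v, φ, hone⟩ := exists_dual_family_matrix_eq_one (M x₀)
  have hminor : (fun x => (Matrix.of fun i j => φ i (M x (v j))).det) ∈ polyFuns K X :=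
    det_mem_polyFuns fun i j => hM (v j) (φ i)
  filter_upwards [eventually_ne_zero_of_mem_polyFuns hminor ⟨x₀, by simp [hone]⟩] with x hx
  have hind : LinearIndependent K fun j => (M x).rangeRestrict (v j) :=
    .of_comp (LinearMap.range (M x)).subtype (linearIndependent_of_det_ne_zero hx)
  simpa using hind.fintype_card_le_finrank

theorem exists_eventually_finrank_range_eq [Infinite K] [FiniteDimensional K W]
    {M : X → V →ₗ[K] W} (hM : IsPolynomialFamily M) :
    ∃ c, ∀ᶠ x in genericFilter K X, finrank K (LinearMap.range (M x)) = c := by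
  have hbdd : BddAbove (Set.range fun x => finrank K (LinearMap.range (M x))) :=
    ⟨finrank K W, by rintro _ ⟨x, rfl⟩; exact Submodule.finrank_le _⟩
  obtain ⟨x₀, hx₀⟩ := Nat.sSup_mem (Set.range_nonempty _) hbdd
  refine ⟨_, (hM.eventually_finrank_range_le x₀).mono fun x hx => le_antisymm ?_ hx⟩
  exact (le_csSup hbdd ⟨x, rfl⟩).trans_eq hx₀.symm

end IsPolynomialFamily

/-- A family of subspaces of the form `A x ⁻¹ (range (B x))` for polynomial families of linear
maps `A x : E → W` and `B x : V → W`. Unlike families of kernels or of ranges alone, these are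
stable both under preimages and under adding ranges of polynomial families. -/
def IsPolynomialSubspaceFamily.{u} {K X : Type*} {E : Type u} [Field K] [AddCommGroup X]
    [Module K X] [AddCommGroup E] [Module K E] (S : X → Submodule K E) : Prop :=
  ∃ (V W : Type u) (_ : AddCommGroup V) (_ : Module K V) (_ : AddCommGroup W) (_ : Module K W)
    (_ : FiniteDimensional K W) (A : X → E →ₗ[K] W) (B : X → V →ₗ[K] W),
    IsPolynomialFamily A ∧ IsPolynomialFamily B ∧ ∀ x, S x = (LinearMap.range (B x)).comap (A x)

namespace IsPolynomialSubspaceFamily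

universe u

variable {K X : Type*} {E E' : Type u} [Field K] [AddCommGroup X] [Module K X]
  [AddCommGroup E] [Module K E] [FiniteDimensional K E] [AddCommGroup E'] [Module K E']
  {S : X → Submodule K E}

theorem bot : IsPolynomialSubspaceFamily fun _ : X => (⊥ : Submodule K E) :=
  ⟨PUnit, E, inferInstance, inferInstance, inferInstance, inferInstance, inferInstance,
    fun _ => LinearMap.id, fun _ => 0, .const _, .const _, fun x => by simp⟩

theorem comap (hS : IsPolynomialSubspaceFamily S) {C : X → E' →ₗ[K] E}
    (hC : IsPolynomialFamily C) : IsPolynomialSubspaceFamily fun x => (S x).comap (C x) := by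
  obtain ⟨V, W, _, _, _, _, _, A, B, hA, hB, hSx⟩ := hS
  exact ⟨V, W, inferInstance, inferInstance, inferInstance, inferInstance, inferInstance,
    fun x => A x ∘ₗ C x, B, hA.comp hC, hB, fun x => by simp only [hSx, Submodule.comap_comp]⟩

theorem sup_range (hS : IsPolynomialSubspaceFamily S) {C : X → E' →ₗ[K] E}
    (hC : IsPolynomialFamily C) :
    IsPolynomialSubspaceFamily fun x => S x ⊔ LinearMap.range (C x) := by
  obtain ⟨V, W, _, _, _, _, _, A, B, hA, hB, hSx⟩ := hS
  refine ⟨V × E', W, inferInstance, inferInstance, inferInstance, inferInstance, inferInstance,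
    A, fun x => (B x).coprod (A x ∘ₗ C x), hA, hB.coprod (hA.comp hC), fun x => ?_⟩
  simp only [hSx, LinearMap.range_coprod, LinearMap.range_comp, comap_sup_map_eq]

theorem exists_eventually_finrank_eq [Infinite K] (hS : IsPolynomialSubspaceFamily S) :
    ∃ c, ∀ᶠ x in genericFilter K X, finrank K (S x) = c := by
  obtain ⟨V, W, _, _, _, _, _, A, B, hA, hB, hSx⟩ := hS
  obtain ⟨b, hb⟩ := hB.exists_eventually_finrank_range_eq
  obtain ⟨a, ha⟩ := (hA.coprod hB).exists_eventually_finrank_range_eq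
  refine ⟨finrank K E + b - a, ?_⟩
  filter_upwards [hb, ha] with x hbx hax
  have hdim := finrank_comap_add_finrank_range_sup (A x) (LinearMap.range (B x))
  rw [← LinearMap.range_coprod, ← hSx] at hdim
  omega

end IsPolynomialSubspaceFamily

end PolynomialFamilies

section WordIdeal

variable {R : Type*} [CommRing R]

theorem wordIdealAux_append (l : ℕ → R) (j : ℕ) (I : Ideal R) (o o' : List Bool) :
    wordIdealAux l j I (o ++ o') = wordIdealAux l (j + o.length) (wordIdealAux l j I o) o' := by
  induction o generalizing j I with
  | nil => rfl
  | cons a o ih =>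
    rw [List.cons_append, wordIdealAux, ih, wordIdealAux, List.length_cons, Nat.add_assoc,
      Nat.add_comm 1]

@[simp]
theorem wordIdeal_append_true (l : ℕ → R) (o : List Bool) :
    wordIdeal l (o ++ [true]) = (wordIdeal l o).colon (Ideal.span {l o.length}) := by
  simp [wordIdeal, wordIdealAux_append, wordIdealAux]

@[simp]
theorem wordIdeal_append_false (l : ℕ → R) (o : List Bool) :
    wordIdeal l (o ++ [false]) = wordIdeal l o ⊔ Ideal.span {l o.length} := by
  simp [wordIdeal, wordIdealAux_append, wordIdealAux]

theorem wordIdeal_congr {l l' : ℕ → R} {o : List Bool} (h : ∀ t < o.length, l t = l' t) :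
    wordIdeal l o = wordIdeal l' o := by
  induction o using List.reverseRecOn with
  | nil => rfl
  | append_singleton o a ih =>
    rw [List.length_append, List.length_singleton] at h
    have hprefix := ih fun t ht => h t (by omega)
    have hlast := h o.length (by omega)
    cases a <;> simp [hprefix, hlast]

theorem wordIdeal_le_wordIdeal_append (l : ℕ → R) (o : List Bool) (a : Bool) :
    wordIdeal l o ≤ wordIdeal l (o ++ [a]) := by
  cases a
  · simp
  · simpa using! Ideal.le_colon

theorem colon_sup_le_sup_colon (I J : Ideal R) (S : Set R) : I.colon S ⊔ J ≤ (I ⊔ J).colon S :=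
  sup_le (Submodule.colon_mono le_sup_left subset_rfl) (le_sup_right.trans Ideal.le_colon)

theorem wordIdeal_append_colon_sum_le_swap (l : ℕ → R) (o : List Bool) :
    wordIdeal l (o ++ [true, false]) ≤
      wordIdeal (l ∘ Equiv.swap o.length (o.length + 1)) (o ++ [false, true]) := by
  have hprefix : wordIdeal (l ∘ Equiv.swap o.length (o.length + 1)) o = wordIdeal l o :=
    wordIdeal_congr fun t ht => by
      rw [Function.comp_apply, Equiv.swap_apply_of_ne_of_ne (by omega) (by omega)]
  rw [List.append_cons o true, List.append_cons o false, wordIdeal_append_false,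
    wordIdeal_append_true, wordIdeal_append_true, wordIdeal_append_false, hprefix]
  simpa only [List.length_append, List.length_singleton, Function.comp_apply, Equiv.swap_apply_left,
    Equiv.swap_apply_right] using colon_sup_le_sup_colon (wordIdeal l o) _ _

end WordIdeal

section HomogeneousIdeals

variable {ι σ A : Type*} [DecidableEq ι] [AddLeftCancelMonoid ι] [CommRing A] [SetLike σ A]
  [AddSubmonoidClass σ A] {𝒜 : ι → σ} [GradedRing 𝒜]

theorem isHomogeneous_colon_span_singleton {I : Ideal A} (hI : I.IsHomogeneous 𝒜) {p : A}
    (hp : SetLike.IsHomogeneousElem 𝒜 p) : (I.colon (Ideal.span {p})).IsHomogeneous 𝒜 := by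
  obtain ⟨k, hk⟩ := hp
  intro i f hf
  rw [Ideal.mem_colon_span_singleton, mul_comm] at hf ⊢
  have hcomp := hI (k + i) hf
  rwa [DirectSum.coe_decompose_mul_add_of_left_mem 𝒜 hk] at hcomp

theorem isHomogeneous_wordIdeal {l : ℕ → A} (hl : ∀ t, SetLike.IsHomogeneousElem 𝒜 (l t))
    (o : List Bool) : (wordIdeal l o).IsHomogeneous 𝒜 := by
  induction o using List.reverseRecOn with
  | nil => exact Ideal.IsHomogeneous.bot 𝒜
  | append_singleton o a ih =>
    cases a
    · rw [wordIdeal_append_false]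
      exact ih.sup (Ideal.homogeneous_span 𝒜 _ (by simpa using hl o.length))
    · rw [wordIdeal_append_true]
      exact isHomogeneous_colon_span_singleton ih (hl o.length)

end HomogeneousIdeals

section GradedComponents

variable {K R : Type*} [Field K] [CommRing R] [Algebra K R] {𝒜 : ℕ → Submodule K R}

@[simp]
theorem mem_homComp {I : Ideal R} {e : ℕ} {f : 𝒜 e} : f ∈ homComp 𝒜 I e ↔ (f : R) ∈ I :=
  Iff.rfl

theorem homComp_bot (e : ℕ) : homComp 𝒜 ⊥ e = ⊥ := by
  ext
  simp

theorem homComp_mono {I J : Ideal R} (h : I ≤ J) (e : ℕ) : homComp 𝒜 I e ≤ homComp 𝒜 J e :=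
  fun _ hf => h hf

theorem homDim_mono {I J : Ideal R} (h : I ≤ J) (e : ℕ) [FiniteDimensional K (𝒜 e)] :
    homDim 𝒜 I e ≤ homDim 𝒜 J e :=
  Submodule.finrank_mono (homComp_mono h e)

theorem homDim_lt_homDim_sup_span_singleton {I : Ideal R} {e : ℕ} [FiniteDimensional K (𝒜 e)]
    {p : R} (hp : p ∈ 𝒜 e) (hpI : p ∉ I) : homDim 𝒜 I e < homDim 𝒜 (I ⊔ Ideal.span {p}) e := by
  refine Submodule.finrank_lt_finrank_of_lt
    (SetLike.lt_iff_le_and_exists.2 ⟨homComp_mono le_sup_left e, ⟨p, hp⟩, ?_, hpI⟩)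
  exact Ideal.mem_sup_right (Ideal.mem_span_singleton_self p)

theorem finiteDimensional_component (hstd : ∀ n, 𝒜 (n + 1) = 𝒜 1 * 𝒜 n)
    [FiniteDimensional K (𝒜 0)] [FiniteDimensional K (𝒜 1)] (e : ℕ) :
    FiniteDimensional K (𝒜 e) := by
  induction e with
  | zero => infer_instance
  | succ n ih =>
    rw [FiniteDimensional, Module.Finite.iff_fg] at ih ⊢
    exact hstd n ▸ (Module.Finite.iff_fg.1 inferInstance).mul ih

variable [GradedAlgebra 𝒜]

theorem homComp_colon_span_singleton (I : Ideal R) {k : ℕ} (p : 𝒜 k) (e : ℕ) :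
    homComp 𝒜 (I.colon (Ideal.span {(p : R)})) e =
      (homComp 𝒜 I (k + e)).comap (DirectSum.gMulLHom K (𝒜 ·) p) := by
  ext f
  simp [mul_comm]

theorem exists_sub_decompose_mul_mem_homComp {I : Ideal R} (hI : I.IsHomogeneous 𝒜) {p : R}
    {e : ℕ} {f : 𝒜 e} (hf : f ∈ homComp 𝒜 (I ⊔ Ideal.span {p}) e) :
    ∃ b, f - DirectSum.decompose 𝒜 (p * b) e ∈ homComp 𝒜 I e := by
  rw [mem_homComp, sup_comm, Ideal.mem_span_singleton_sup] at hf
  obtain ⟨b, a, ha, hab⟩ := hf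
  refine ⟨b, ?_⟩
  have hcomp := hI e ha
  rw [eq_sub_of_add_eq' hab, mul_comm b, DirectSum.decompose_sub, DirectSum.sub_apply,
    DirectSum.decompose_coe, DirectSum.of_eq_same] at hcomp
  exact hcomp

theorem homComp_sup_span_singleton_add {I : Ideal R} (hI : I.IsHomogeneous 𝒜) {k : ℕ} (p : 𝒜 k)
    (e : ℕ) :
    homComp 𝒜 (I ⊔ Ideal.span {(p : R)}) (k + e) =
      homComp 𝒜 I (k + e) ⊔ LinearMap.range (DirectSum.gMulLHom K (𝒜 ·) p) := by
  refine le_antisymm (fun f hf => ?_) (sup_le (homComp_mono le_sup_left _) ?_)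
  · obtain ⟨b, hb⟩ := exists_sub_decompose_mul_mem_homComp hI hf
    refine Submodule.mem_sup.2 ⟨_, hb, _, ⟨DirectSum.decompose 𝒜 b e, ?_⟩, sub_add_cancel _ _⟩
    exact Subtype.ext (DirectSum.coe_decompose_mul_add_of_left_mem 𝒜 p.2).symm
  · rintro _ ⟨g, rfl⟩
    exact Ideal.mem_sup_right (Ideal.mul_mem_right _ _ (Ideal.mem_span_singleton_self _))

theorem homComp_sup_span_singleton_of_lt {I : Ideal R} (hI : I.IsHomogeneous 𝒜) {k e : ℕ}
    (p : 𝒜 k) (he : e < k) : homComp 𝒜 (I ⊔ Ideal.span {(p : R)}) e = homComp 𝒜 I e := by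
  refine le_antisymm (fun f hf => ?_) (homComp_mono le_sup_left e)
  obtain ⟨b, hb⟩ := exists_sub_decompose_mul_mem_homComp hI hf
  rwa [mem_homComp, AddSubgroupClass.coe_sub,
    DirectSum.coe_decompose_mul_of_left_mem_of_not_le 𝒜 p.2 he.not_ge, sub_zero] at hb

theorem irrelevant_le_of_finrank_le_homDim (hstd : ∀ n, 𝒜 (n + 1) = 𝒜 1 * 𝒜 n)
    [FiniteDimensional K (𝒜 1)] {I : Ideal R} (hI : finrank K (𝒜 1) ≤ homDim 𝒜 I 1) :
    (HomogeneousIdeal.irrelevant 𝒜).toIdeal ≤ I := by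
  have htop : homComp 𝒜 I 1 = ⊤ :=
    Submodule.eq_top_of_finrank_eq (le_antisymm (Submodule.finrank_le _) hI)
  have hlinear : ∀ f ∈ 𝒜 1, f ∈ I := fun f hf => by
    simpa using (htop ▸ Submodule.mem_top : (⟨f, hf⟩ : 𝒜 1) ∈ homComp 𝒜 I 1)
  rw [HomogeneousIdeal.toIdeal_irrelevant_le]
  rintro (_ | n) hi
  · exact absurd hi (lt_irrefl 0)
  · have hmul : 𝒜 1 * 𝒜 n ≤ I.restrictScalars K :=
      Submodule.mul_le.2 fun a ha b _ => I.mul_mem_right b (hlinear a ha)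
    exact hstd n ▸ hmul

theorem irrelevant_le_wordIdeal_or_count_false_le_homDim [FiniteDimensional K (𝒜 1)]
    {l : ℕ → R} (hl : ∀ t, l t ∈ 𝒜 1) {o : List Bool}
    (hnotMem : ∀ o' : List Bool, o'.length < o.length →
      ¬ (HomogeneousIdeal.irrelevant 𝒜).toIdeal ≤ wordIdeal l o' →
        l o'.length ∉ wordIdeal l o') :
    (HomogeneousIdeal.irrelevant 𝒜).toIdeal ≤ wordIdeal l o ∨
      o.count false ≤ homDim 𝒜 (wordIdeal l o) 1 := by
  induction o using List.reverseRecOn with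
  | nil => simp
  | append_singleton o a ih =>
    rw [List.length_append, List.length_singleton] at hnotMem
    have hle := wordIdeal_le_wordIdeal_append l o a
    by_cases hm : (HomogeneousIdeal.irrelevant 𝒜).toIdeal ≤ wordIdeal l o
    · exact .inl (hm.trans hle)
    have hcount := (ih fun o' ho' => hnotMem o' (by omega)).resolve_left hm
    refine .inr ?_
    cases a
    · have hlt := homDim_lt_homDim_sup_span_singleton (hl o.length) (hnotMem o (by omega) hm)
      rw [wordIdeal_append_false, List.count_append, List.count_singleton_self]
      omega
    · simpa [-wordIdeal_append_true] using hcount.trans (homDim_mono hle 1)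

end GradedComponents

section GeneralLinearForms

variable {K R : Type*} [Field K] [CommRing R] [Algebra K R]

/-- The sequence `x 0, …, x (r - 1), 0, 0, …` of elements of `R` attached to an `r`-tuple `x`,
which is how tuples of linear forms enter `wordIdeal` and `GrProp`. -/
def formSeq {S : Submodule K R} {r : ℕ} (x : Fin r → S) (t : ℕ) : R :=
  if h : t < r then x ⟨t, h⟩ else 0

section FormSeq

variable {S : Submodule K R} {r : ℕ}

theorem formSeq_coe (x : Fin r → S) (i : Fin r) : formSeq x i = x i :=
  dif_pos i.2

theorem exists_linearMap_eq_formSeq (t : ℕ) :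
    ∃ L : (Fin r → S) →ₗ[K] S, ∀ x, formSeq x t = L x := by
  by_cases ht : t < r
  · lift t to Fin r using ht
    exact ⟨LinearMap.proj t, fun x => formSeq_coe x t⟩
  · exact ⟨0, fun x => dif_neg ht⟩

theorem formSeq_mem (x : Fin r → S) (t : ℕ) : formSeq x t ∈ S := by
  obtain ⟨L, hL⟩ := exists_linearMap_eq_formSeq (K := K) (S := S) (r := r) t
  exact hL x ▸ (L x).2

theorem formSeq_update_of_ne (x : Fin r → S) (i : Fin r) (y : S) {t : ℕ} (ht : t ≠ i) :
    formSeq (Function.update x i y) t = formSeq x t := by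
  unfold formSeq
  split_ifs with h
  · rw [Function.update_of_ne (Fin.ne_of_val_ne ht)]
  · rfl

theorem formSeq_comp_swap (x : Fin r → S) (i j : Fin r) :
    formSeq (x ∘ Equiv.swap i j) = formSeq x ∘ Equiv.swap (i : ℕ) j := by
  ext t
  by_cases ht : t < r
  · lift t to Fin r using ht
    rw [Function.comp_apply, ← Fin.val_injective.map_swap, formSeq_coe, formSeq_coe,
      Function.comp_apply]
  · rw [Function.comp_apply, Equiv.swap_apply_of_ne_of_ne (by omega) (by omega)]
    simp [formSeq, ht]

end FormSeq

variable {𝒜 : ℕ → Submodule K R}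

theorem isPolynomialSubspaceFamily_homComp_wordIdeal [GradedAlgebra 𝒜]
    [∀ e, FiniteDimensional K (𝒜 e)] {X : Type*} [AddCommGroup X] [Module K X] {l : X → ℕ → R}
    (hl : ∀ t, ∃ L : X →ₗ[K] 𝒜 1, ∀ x, l x t = L x)
    (o : List Bool) (e : ℕ) :
    IsPolynomialSubspaceFamily fun x => homComp 𝒜 (wordIdeal (l x) o) e := by
  have hhom (x : X) (o : List Bool) : (wordIdeal (l x) o).IsHomogeneous 𝒜 :=
    isHomogeneous_wordIdeal (fun t => ⟨1, by obtain ⟨L, hL⟩ := hl t; exact hL x ▸ (L x).2⟩) o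
  induction o using List.reverseRecOn generalizing e with
  | nil => simpa only [wordIdeal, wordIdealAux, homComp_bot] using .bot
  | append_singleton o a ih =>
    obtain ⟨L, hL⟩ := hl o.length
    have hmul (e : ℕ) :
        IsPolynomialFamily fun x => DirectSum.gMulLHom K (𝒜 ·) (j := e) (L x) :=
      .linear (DirectSum.gMulLHom K (𝒜 ·) ∘ₗ L)
    cases a
    · simp only [wordIdeal_append_false, hL]
      obtain rfl | ⟨e, rfl⟩ : e = 0 ∨ ∃ e', e = 1 + e' := by
        rcases e with _ | e
        · exact .inl rfl
        · exact .inr ⟨e, Nat.add_comm e 1⟩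
      · simpa only [homComp_sup_span_singleton_of_lt (hhom _ o) _ Nat.zero_lt_one] using ih 0
      · simpa only [homComp_sup_span_singleton_add (hhom _ o)] using (ih (1 + e)).sup_range (hmul e)
    · simpa only [wordIdeal_append_true, hL, homComp_colon_span_singleton]
        using (ih (1 + e)).comap (hmul e)

variable [Infinite K] {r : ℕ}

theorem exists_homDim_wordIdeal_lt_append_false [FiniteDimensional K (𝒜 1)]
    {o : List Bool} (ho : o.length < r)
    {P : (Fin r → 𝒜 1) → Prop} (hP : ∀ᶠ x in genericFilter K (Fin r → 𝒜 1), P x)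
    (hlt : ∀ᶠ x in genericFilter K (Fin r → 𝒜 1),
      homDim 𝒜 (wordIdeal (formSeq x) o) 1 < finrank K (𝒜 1)) :
    ∃ x, P x ∧ homDim 𝒜 (wordIdeal (formSeq x) o) 1 <
      homDim 𝒜 (wordIdeal (formSeq x) (o ++ [false])) 1 := by
  let i : Fin r := ⟨o.length, ho⟩
  obtain ⟨x, hPx, hltx⟩ := ((eventually_eventually_update hP i).and hlt).exists
  have hproper : homComp 𝒜 (wordIdeal (formSeq x) o) 1 ≠ ⊤ := fun htop =>
    hltx.ne (by rw [homDim, htop, finrank_top])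
  obtain ⟨y, hPy, hy⟩ := (hPx.and (eventually_notMem_of_ne_top hproper)).exists
  refine ⟨Function.update x i y, hPy, ?_⟩
  have hprefix : wordIdeal (formSeq (Function.update x i y)) o = wordIdeal (formSeq x) o :=
    wordIdeal_congr fun t ht => formSeq_update_of_ne x i y ht.ne
  have hlast : formSeq (Function.update x i y) o.length = y := by
    simpa using formSeq_coe (Function.update x i y) i
  rw [wordIdeal_append_false, hprefix, hlast]
  exact homDim_lt_homDim_sup_span_singleton y.2 hy

variable [GradedAlgebra 𝒜] [∀ e, FiniteDimensional K (𝒜 e)]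

theorem exists_eventually_homDim_wordIdeal_formSeq_eq (o : List Bool) (e : ℕ) :
    ∃ c, ∀ᶠ x in genericFilter K (Fin r → 𝒜 1), homDim 𝒜 (wordIdeal (formSeq x) o) e = c :=
  (isPolynomialSubspaceFamily_homComp_wordIdeal exists_linearMap_eq_formSeq o e)
    |>.exists_eventually_finrank_eq

theorem eventually_formSeq_notMem_wordIdeal (hstd : ∀ n, 𝒜 (n + 1) = 𝒜 1 * 𝒜 n)
    {o : List Bool} (ho : o.length < r) :
    ∀ᶠ x in genericFilter K (Fin r → 𝒜 1),
      ¬ (HomogeneousIdeal.irrelevant 𝒜).toIdeal ≤ wordIdeal (formSeq x) o →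
        formSeq x o.length ∉ wordIdeal (formSeq x) o := by
  obtain ⟨c, hc⟩ := exists_eventually_homDim_wordIdeal_formSeq_eq (𝒜 := 𝒜) (r := r) o 1
  obtain ⟨c', hc'⟩ :=
    exists_eventually_homDim_wordIdeal_formSeq_eq (𝒜 := 𝒜) (r := r) (o ++ [false]) 1
  obtain hfull | hproper := le_or_gt (finrank K (𝒜 1)) c
  · filter_upwards [hc] with x hx hm
    exact absurd (irrelevant_le_of_finrank_le_homDim hstd (hx ▸ hfull)) hm
  · obtain ⟨x₀, ⟨hx₀, hx₀'⟩, hlt⟩ :=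
      exists_homDim_wordIdeal_lt_append_false ho (hc.and hc') (hc.mono fun x hx => hx ▸ hproper)
    filter_upwards [hc, hc'] with x hx hx' _ hmem
    rw [wordIdeal_append_false, sup_eq_left.2 ((Ideal.span_singleton_le_iff_mem _).2 hmem)] at hx'
    omega

theorem eventually_homDim_colon_sum_le_sum_colon {o : List Bool} (ho : o.length + 2 ≤ r) (e : ℕ) :
    ∀ᶠ x in genericFilter K (Fin r → 𝒜 1),
      homDim 𝒜 (wordIdeal (formSeq x) (o ++ [true, false])) e ≤
        homDim 𝒜 (wordIdeal (formSeq x) (o ++ [false, true])) e := by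
  obtain ⟨c, hc⟩ :=
    exists_eventually_homDim_wordIdeal_formSeq_eq (𝒜 := 𝒜) (r := r) (o ++ [true, false]) e
  obtain ⟨c', hc'⟩ :=
    exists_eventually_homDim_wordIdeal_formSeq_eq (𝒜 := 𝒜) (r := r) (o ++ [false, true]) e
  let i : Fin r := ⟨o.length, by omega⟩
  let j : Fin r := ⟨o.length + 1, by omega⟩
  have hswap := tendsto_genericFilter_of_surjective (LinearMap.funLeft K (𝒜 1) (Equiv.swap i j))
    (LinearMap.funLeft_surjective_of_injective _ _ _ (Equiv.injective _))
  obtain ⟨x₀, hx₀, hx₀'⟩ := (hc.and (hswap.eventually hc')).exists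
  have hle : c ≤ c' := by
    rw [← hx₀, ← hx₀']
    change _ ≤ homDim 𝒜 (wordIdeal (formSeq (x₀ ∘ Equiv.swap i j)) _) e
    rw [formSeq_comp_swap]
    exact homDim_mono (wordIdeal_append_colon_sum_le_swap _ o) e
  filter_upwards [hc, hc'] with x hx hx'
  rwa [hx, hx']

end GeneralLinearForms

theorem general_linear_forms_satisfy_Gr_general
    {K R : Type*} [Field K] [Infinite K] [CommRing R] [Algebra K R]
    (𝒜 : ℕ → Submodule K R) [GradedAlgebra 𝒜] (hstd : ∀ n, 𝒜 (n + 1) = 𝒜 1 * 𝒜 n)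
    [FiniteDimensional K (𝒜 0)] [FiniteDimensional K (𝒜 1)] (d r : ℕ)
    (hr : Module.finrank K (𝒜 1) + d ≤ r + 1) :
    ∃ U : Set (Fin r → 𝒜 1), IsZOpen K U ∧ U.Nonempty ∧
      ∀ x ∈ U, GrProp 𝒜 (fun t => if h : t < r then (x ⟨t, h⟩ : R) else 0) r d := by
  have := finiteDimensional_component hstd
  have hwords := List.finite_length_le Bool r
  have hnotMem := (Filter.eventually_all_finite hwords).2 fun o _ =>
    Filter.eventually_imp_distrib_left.2 fun ho : o.length < r =>
      eventually_formSeq_notMem_wordIdeal hstd ho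
  have hswap := (Filter.eventually_all_finite hwords).2 fun o _ =>
    Filter.eventually_imp_distrib_left.2 fun ho : o.length + 2 ≤ r =>
      eventually_homDim_colon_sum_le_sum_colon (𝒜 := 𝒜) ho (d - o.count true - 1)
  refine exists_isZOpen_of_eventually ?_
  filter_upwards [hnotMem, hswap] with x hnotMem hswap o ho
  refine ⟨fun hm hlt => hnotMem o ho hlt hm, fun hlen hcolon => ?_, hswap o ho⟩
  obtain hm | hsum := irrelevant_le_wordIdeal_or_count_false_le_homDim (o := o) (formSeq_mem x)
    fun o' ho' => hnotMem o' (ho'.le.trans ho) (ho'.trans_le ho)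
  · exact hm
  · have := List.count_true_add_count_false o
    exact irrelevant_le_of_finrank_le_homDim hstd (le_trans (by omega) hsum)

/-- For a standard graded algebra `R` over an infinite field `K`, `d > 0` and
`r ≥ d + n - 1` (`n = dim_K R_1`), `r` general linear forms of `R` satisfy property
(Gr,d): there is a nonempty Zariski open `U ⊆ 𝔸(R_1)^r` all of whose tuples satisfy
(Gr,d). -/
theorem general_linear_forms_satisfy_Gr
    {K R : Type*} [Field K] [Infinite K] [CommRing R] [Algebra K R]
    (𝒜 : ℕ → Submodule K R) [GradedAlgebra 𝒜]
    (h0 : 𝒜 0 = (1 : Submodule K R)) (hstd : ∀ n, 𝒜 (n + 1) = 𝒜 1 * 𝒜 n)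
    [FiniteDimensional K (𝒜 1)] (d r : ℕ) (hd : 0 < d)
    (hr : Module.finrank K (𝒜 1) + d ≤ r + 1) :
    ∃ U : Set (Fin r → 𝒜 1), IsZOpen K U ∧ U.Nonempty ∧
      ∀ x ∈ U, GrProp 𝒜 (fun t => if h : t < r then (x ⟨t, h⟩ : R) else 0) r d := by
  have : FiniteDimensional K (𝒜 0) := by
    rw [h0, Submodule.one_eq_span]; infer_instance
  exact general_linear_forms_satisfy_Gr_general 𝒜 hstd d r hr
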